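/- arXiv:0709.4587 — 10 statements merged into one kernel-verified Lean document; each statement's English description precedes it below -/
import Mathlib

section
/- Let Ω ⊆ ℂ be open and let X, Y, Z : Ω → ℂ be differentiable functions satisfying Halphen's first system X' + Y' = 2XY, Y' + Z' = 2YZ, Z' + X' = 2ZX on Ω. Then the function y := 2(X + Y + Z) is three times differentiable on Ω and satisfies Chazy's equation y''' = 2 y y'' − 3 (y')² on Ω. -/
/-- **Halphen's first system implies Chazy's equation.**
If `X, Y, Z` are differentiable on an open set `Ω ⊆ ℂ` and satisfy Halphen's first system
`X' + Y' = 2XY`, `Y' + Z' = 2YZ`, `Z' + X' = 2ZX` on `Ω`, then `y := 2(X + Y + Z)` is three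
times differentiable on `Ω` and satisfies Chazy's equation `y''' = 2 y y'' − 3 (y')²` on `Ω`. -/
theorem halphen_first_implies_chazy
    (Ω : Set ℂ) (hΩ : IsOpen Ω) (X Y Z : ℂ → ℂ)
    (hX : ∀ t ∈ Ω, DifferentiableAt ℂ X t)
    (hY : ∀ t ∈ Ω, DifferentiableAt ℂ Y t)
    (hZ : ∀ t ∈ Ω, DifferentiableAt ℂ Z t)
    (h1 : ∀ t ∈ Ω, deriv X t + deriv Y t = 2 * X t * Y t)
    (h2 : ∀ t ∈ Ω, deriv Y t + deriv Z t = 2 * Y t * Z t)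
    (h3 : ∀ t ∈ Ω, deriv Z t + deriv X t = 2 * Z t * X t) :
    ∀ t ∈ Ω,
      DifferentiableAt ℂ (fun s => 2 * (X s + Y s + Z s)) t ∧
      DifferentiableAt ℂ (deriv (fun s => 2 * (X s + Y s + Z s))) t ∧
      DifferentiableAt ℂ (deriv (deriv (fun s => 2 * (X s + Y s + Z s)))) t ∧
      deriv (deriv (deriv (fun s => 2 * (X s + Y s + Z s)))) t =
        2 * (2 * (X t + Y t + Z t)) * deriv (deriv (fun s => 2 * (X s + Y s + Z s))) t -
          3 * (deriv (fun s => 2 * (X s + Y s + Z s)) t) ^ 2 := by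
  have dX : ∀ t ∈ Ω, HasDerivAt X (X t * Y t + Z t * X t - Y t * Z t) t := fun t ht =>
    (hX t ht).hasDerivAt.congr_deriv (by linear_combination (h1 t ht - h2 t ht + h3 t ht) / 2)
  have dY : ∀ t ∈ Ω, HasDerivAt Y (X t * Y t + Y t * Z t - Z t * X t) t := fun t ht =>
    (hY t ht).hasDerivAt.congr_deriv (by linear_combination (h1 t ht + h2 t ht - h3 t ht) / 2)
  have dZ : ∀ t ∈ Ω, HasDerivAt Z (Y t * Z t + Z t * X t - X t * Y t) t := fun t ht =>
    (hZ t ht).hasDerivAt.congr_deriv (by linear_combination (h2 t ht + h3 t ht - h1 t ht) / 2)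
  -- The derivatives of the elementary symmetric functions are `e₂`, `6 e₃`, `4 e₁ e₃ - e₂ ^ 2`.
  have dy : ∀ t ∈ Ω, HasDerivAt (fun s => 2 * (X s + Y s + Z s))
      (2 * (X t * Y t + Y t * Z t + Z t * X t)) t := fun t ht =>
    ((((dX t ht).add (dY t ht)).add (dZ t ht)).const_mul 2).congr_deriv (by ring)
  have ddy : ∀ t ∈ Ω, HasDerivAt (deriv (fun s => 2 * (X s + Y s + Z s)))
      (12 * (X t * Y t * Z t)) t := fun t ht =>
    ((((((dX t ht).mul (dY t ht)).add ((dY t ht).mul (dZ t ht))).add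
      ((dZ t ht).mul (dX t ht))).const_mul 2).congr_deriv (by ring)).congr_of_eventuallyEq
        (Filter.eventually_of_mem (hΩ.mem_nhds ht) fun s hs => (dy s hs).deriv)
  have dddy : ∀ t ∈ Ω, HasDerivAt (deriv (deriv (fun s => 2 * (X s + Y s + Z s))))
      (12 * (4 * (X t + Y t + Z t) * (X t * Y t * Z t) -
        (X t * Y t + Y t * Z t + Z t * X t) ^ 2)) t := fun t ht =>
    (((((dX t ht).mul (dY t ht)).mul (dZ t ht)).const_mul 12).congr_deriv
      (by simp only [Pi.mul_apply]; ring)).congr_of_eventuallyEq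
        (Filter.eventually_of_mem (hΩ.mem_nhds ht) fun s hs => (ddy s hs).deriv)
  intro t ht
  refine ⟨(dy t ht).differentiableAt, (ddy t ht).differentiableAt,
    (dddy t ht).differentiableAt, ?_⟩
  rw [(dddy t ht).deriv, (ddy t ht).deriv, (dy t ht).deriv]
  ring
end

section
/- Let Ω ⊆ ℂ be open and let x₁, x₂, x₃ : Ω → ℂ be differentiable. Define X, Y, Z : Ω → ℂ by 2X = x₂ + x₃, 2Y = x₃ + x₁, 2Z = x₁ + x₂. Then (x₁, x₂, x₃) satisfies Halphen's second system with parameters a = b = c = −1/8 on Ω if and only if (X, Y, Z) satisfies Halphen's first system X' + Y' = 2XY, Y' + Z' = 2YZ, Z' + X' = 2ZX on Ω. -/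
/-- **Equivalence of Halphen's second system with parameters `a = b = c = −1/8` and
Halphen's first system** under `2X = x₂ + x₃`, `2Y = x₃ + x₁`, `2Z = x₁ + x₂`. -/
theorem halphen_second_neg_eighth_iff_halphen_first
    (Ω : Set ℂ) (hΩ : IsOpen Ω) (x₁ x₂ x₃ : ℂ → ℂ)
    (h₁ : ∀ t ∈ Ω, DifferentiableAt ℂ x₁ t)
    (h₂ : ∀ t ∈ Ω, DifferentiableAt ℂ x₂ t)
    (h₃ : ∀ t ∈ Ω, DifferentiableAt ℂ x₃ t)
    (X Y Z : ℂ → ℂ)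
    (hX : ∀ t, X t = (x₂ t + x₃ t) / 2)
    (hY : ∀ t, Y t = (x₃ t + x₁ t) / 2)
    (hZ : ∀ t, Z t = (x₁ t + x₂ t) / 2) :
    (∀ t ∈ Ω,
        deriv x₁ t = x₁ t ^ 2 + (-(1/8) : ℂ) * (x₁ t - x₂ t) ^ 2 +
          (-(1/8) : ℂ) * (x₂ t - x₃ t) ^ 2 + (-(1/8) : ℂ) * (x₃ t - x₁ t) ^ 2 ∧
        deriv x₂ t = x₂ t ^ 2 + (-(1/8) : ℂ) * (x₁ t - x₂ t) ^ 2 +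
          (-(1/8) : ℂ) * (x₂ t - x₃ t) ^ 2 + (-(1/8) : ℂ) * (x₃ t - x₁ t) ^ 2 ∧
        deriv x₃ t = x₃ t ^ 2 + (-(1/8) : ℂ) * (x₁ t - x₂ t) ^ 2 +
          (-(1/8) : ℂ) * (x₂ t - x₃ t) ^ 2 + (-(1/8) : ℂ) * (x₃ t - x₁ t) ^ 2) ↔
    (∀ t ∈ Ω,
        deriv X t + deriv Y t = 2 * X t * Y t ∧
        deriv Y t + deriv Z t = 2 * Y t * Z t ∧
        deriv Z t + deriv X t = 2 * Z t * X t) := by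
  have deriv_half_add : ∀ {f g F : ℂ → ℂ}, (∀ t, F t = (f t + g t) / 2) →
      ∀ {t : ℂ}, DifferentiableAt ℂ f t → DifferentiableAt ℂ g t →
        deriv F t = (deriv f t + deriv g t) / 2 := by
    intro f g F hF t hf hg
    rw [funext hF]
    exact ((hf.hasDerivAt.add hg.hasDerivAt).div_const 2).deriv
  refine forall₂_congr fun t ht => ?_
  rw [deriv_half_add hX (h₂ t ht) (h₃ t ht), deriv_half_add hY (h₃ t ht) (h₁ t ht),
    deriv_half_add hZ (h₁ t ht) (h₂ t ht), hX, hY, hZ]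
  constructor
  · rintro ⟨e₁, e₂, e₃⟩
    rw [e₁, e₂, e₃]
    refine ⟨?_, ?_, ?_⟩ <;> ring
  · rintro ⟨eXY, eYZ, eZX⟩
    refine ⟨?_, ?_, ?_⟩
    · linear_combination (3 * eYZ - eXY - eZX) / 2
    · linear_combination (3 * eZX - eXY - eYZ) / 2
    · linear_combination (3 * eXY - eYZ - eZX) / 2
end

section
/- Let X, Y, Z : ℍ → ℂ satisfy Halphen's first system X' + Y' = 2XY, Y' + Z' = 2YZ, Z' + X' = 2ZX on the upper half plane ℍ, and let a, b, c, d be real numbers with ad − bc = 1. Then the functions X̃(t) = (ct+d)⁻² X((at+b)/(ct+d)) − c/(ct+d), Ỹ(t) = (ct+d)⁻² Y((at+b)/(ct+d)) − c/(ct+d), Z̃(t) = (ct+d)⁻² Z((at+b)/(ct+d)) − c/(ct+d) also satisfy Halphen's first system on ℍ. -/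
/-- A real linear denominator `c t + d` of a unimodular matrix does not vanish on the upper half
plane. -/
lemma real_denom_ne_zero {a b c d : ℝ} (h : a * d - b * c = 1) {t : ℂ} (ht : 0 < t.im) :
    (c : ℂ) * t + d ≠ 0 := by
  intro h0
  have him := congrArg Complex.im h0
  have hre := congrArg Complex.re h0
  simp at him hre
  rcases him with rfl | him
  · simp at hre
    simp [hre] at h
  · exact ht.ne him.symm

/-- A real unimodular Möbius map preserves the upper half plane. -/
lemma real_moebius_im_pos {a b c d : ℝ} (h : a * d - b * c = 1) {t : ℂ} (ht : 0 < t.im) :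
    0 < (((a : ℂ) * t + b) / ((c : ℂ) * t + d)).im := by
  have hn : 0 < Complex.normSq ((c : ℂ) * t + d) :=
    Complex.normSq_pos.mpr (real_denom_ne_zero h ht)
  have key : (((a : ℂ) * t + b) / ((c : ℂ) * t + d)).im
      = t.im / Complex.normSq ((c : ℂ) * t + d) := by
    rw [Complex.div_im, ← sub_div]
    congr 1
    simp
    linear_combination t.im * h
  rw [key]
  exact div_pos ht hn

/-- The derivative of the transform of `X` under a real unimodular Möbius map. -/
lemma deriv_moebius_transform {X Xt : ℂ → ℂ} {a b c d : ℝ} (h : a * d - b * c = 1)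
    (hXt : ∀ t : ℂ, Xt t = ((c : ℂ) * t + d)⁻¹ ^ 2 *
      X (((a : ℂ) * t + b) / ((c : ℂ) * t + d)) - (c : ℂ) / ((c : ℂ) * t + d))
    {t : ℂ} (ht : 0 < t.im)
    (hX : DifferentiableAt ℂ X (((a : ℂ) * t + b) / ((c : ℂ) * t + d))) :
    deriv Xt t = ((c : ℂ) * t + d)⁻¹ ^ 4 * deriv X (((a : ℂ) * t + b) / ((c : ℂ) * t + d))
      - 2 * c * ((c : ℂ) * t + d)⁻¹ ^ 3 * X (((a : ℂ) * t + b) / ((c : ℂ) * t + d))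
      + c ^ 2 * ((c : ℂ) * t + d)⁻¹ ^ 2 := by
  have hj : (c : ℂ) * t + d ≠ 0 := real_denom_ne_zero h ht
  have hC : (a : ℂ) * d - b * c = 1 := by exact_mod_cast h
  have affine (p q : ℂ) : HasDerivAt (fun z : ℂ => p * z + q) p t := by
    simpa using ((hasDerivAt_id t).const_mul p).add_const q
  have hden := affine c d
  have hmoebius : HasDerivAt (fun z : ℂ => ((a : ℂ) * z + b) / ((c : ℂ) * z + d))
      (((c : ℂ) * t + d)⁻¹ ^ 2) t := by
    refine ((affine a b).fun_div hden hj).congr_deriv (Eq.symm ?_)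
    rw [eq_div_iff (pow_ne_zero 2 hj), ← mul_pow, inv_mul_cancel₀ hj]
    linear_combination -hC
  have hcomp : HasDerivAt (fun z : ℂ => X (((a : ℂ) * z + b) / ((c : ℂ) * z + d))) _ t :=
    HasDerivAt.comp t hX.hasDerivAt hmoebius
  have hall := (((hden.fun_inv hj).fun_pow 2).fun_mul hcomp).fun_sub
    ((hasDerivAt_const t (c : ℂ)).fun_div hden hj)
  rw [funext hXt, hall.deriv]
  simp only [div_eq_mul_inv, ← inv_pow]
  push_cast
  ring

/-- Each equation of Halphen's first system is preserved by a real unimodular Möbius map. -/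
lemma moebius_transform_add_deriv {X Y Xt Yt : ℂ → ℂ} {a b c d : ℝ} (h : a * d - b * c = 1)
    (hX : ∀ t : ℂ, 0 < t.im → DifferentiableAt ℂ X t)
    (hY : ∀ t : ℂ, 0 < t.im → DifferentiableAt ℂ Y t)
    (hXY : ∀ t : ℂ, 0 < t.im → deriv X t + deriv Y t = 2 * X t * Y t)
    (hXt : ∀ t : ℂ, Xt t = ((c : ℂ) * t + d)⁻¹ ^ 2 *
      X (((a : ℂ) * t + b) / ((c : ℂ) * t + d)) - (c : ℂ) / ((c : ℂ) * t + d))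
    (hYt : ∀ t : ℂ, Yt t = ((c : ℂ) * t + d)⁻¹ ^ 2 *
      Y (((a : ℂ) * t + b) / ((c : ℂ) * t + d)) - (c : ℂ) / ((c : ℂ) * t + d))
    {t : ℂ} (ht : 0 < t.im) :
    deriv Xt t + deriv Yt t = 2 * Xt t * Yt t := by
  have him := real_moebius_im_pos h ht
  rw [deriv_moebius_transform h hXt ht (hX _ him), deriv_moebius_transform h hYt ht (hY _ him),
    hXt, hYt, div_eq_mul_inv (c : ℂ)]
  linear_combination ((c : ℂ) * t + d)⁻¹ ^ 4 * hXY _ him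

/-- **SL(2,ℝ)-invariance of Halphen's first system.**
If `(X, Y, Z)` solves Halphen's first system on the upper half plane `ℍ = {t | 0 < im t}`,
and `a, b, c, d ∈ ℝ` with `ad − bc = 1`, then
`X̃(t) = (ct+d)⁻² X((at+b)/(ct+d)) − c/(ct+d)` (and similarly `Ỹ`, `Z̃`)
also solves Halphen's first system on `ℍ`. -/
theorem halphen_first_sl2_invariance
    (X Y Z : ℂ → ℂ)
    (hX : ∀ t : ℂ, 0 < t.im → DifferentiableAt ℂ X t)
    (hY : ∀ t : ℂ, 0 < t.im → DifferentiableAt ℂ Y t)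
    (hZ : ∀ t : ℂ, 0 < t.im → DifferentiableAt ℂ Z t)
    (hsys : ∀ t : ℂ, 0 < t.im →
      deriv X t + deriv Y t = 2 * X t * Y t ∧
      deriv Y t + deriv Z t = 2 * Y t * Z t ∧
      deriv Z t + deriv X t = 2 * Z t * X t)
    (a b c d : ℝ) (habcd : a * d - b * c = 1)
    (Xt Yt Zt : ℂ → ℂ)
    (hXt : ∀ t : ℂ, Xt t = ((c : ℂ) * t + d)⁻¹ ^ 2 *
      X (((a : ℂ) * t + b) / ((c : ℂ) * t + d)) - (c : ℂ) / ((c : ℂ) * t + d))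
    (hYt : ∀ t : ℂ, Yt t = ((c : ℂ) * t + d)⁻¹ ^ 2 *
      Y (((a : ℂ) * t + b) / ((c : ℂ) * t + d)) - (c : ℂ) / ((c : ℂ) * t + d))
    (hZt : ∀ t : ℂ, Zt t = ((c : ℂ) * t + d)⁻¹ ^ 2 *
      Z (((a : ℂ) * t + b) / ((c : ℂ) * t + d)) - (c : ℂ) / ((c : ℂ) * t + d)) :
    ∀ t : ℂ, 0 < t.im →
      deriv Xt t + deriv Yt t = 2 * Xt t * Yt t ∧
      deriv Yt t + deriv Zt t = 2 * Yt t * Zt t ∧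
      deriv Zt t + deriv Xt t = 2 * Zt t * Xt t := by
  intro t ht
  exact ⟨moebius_transform_add_deriv habcd hX hY (fun s hs => (hsys s hs).1) hXt hYt ht,
    moebius_transform_add_deriv habcd hY hZ (fun s hs => (hsys s hs).2.1) hYt hZt ht,
    moebius_transform_add_deriv habcd hZ hX (fun s hs => (hsys s hs).2.2) hZt hXt ht⟩
end

section
/- Let y : ℍ → ℂ be three times differentiable and satisfy Chazy's equation y''' = 2 y y'' − 3(y')² on the upper half plane ℍ, and let a, b, c, d be real numbers with ad − bc = 1. Then the function ỹ(t) = (ct+d)⁻² y((at+b)/(ct+d)) − 6c/(ct+d) also satisfies Chazy's equation on ℍ. -/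
open Topology

/-- `ct + d ≠ 0` on the upper half plane when `ad - bc = 1`. -/
lemma moebius_denom_ne_zero {a b c d : ℝ} (habcd : a * d - b * c = 1) {t : ℂ}
    (ht : 0 < t.im) : (c : ℂ) * t + d ≠ 0 := by
  intro h
  have him := congrArg Complex.im h
  have hre := congrArg Complex.re h
  simp at him hre
  rcases him with rfl | him
  · simp at hre
    simp [hre] at habcd
  · exact ht.ne' him

/-- A real Möbius map of determinant one preserves the upper half plane. -/
lemma moebius_im_pos {a b c d : ℝ} (habcd : a * d - b * c = 1) {t : ℂ} (ht : 0 < t.im) :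
    0 < (((a : ℂ) * t + b) / ((c : ℂ) * t + d)).im := by
  have hpos : 0 < Complex.normSq ((c : ℂ) * t + d) :=
    Complex.normSq_pos.mpr (moebius_denom_ne_zero habcd ht)
  have him : (((a : ℂ) * t + b) / ((c : ℂ) * t + d)).im
      = t.im / Complex.normSq ((c : ℂ) * t + d) := by
    rw [Complex.div_im, ← sub_div]
    congr 1
    simp
    linear_combination t.im * habcd
  rw [him]
  exact div_pos ht hpos

/-- Derivative of a power of the inverse denominator `(ct + d)⁻¹`. -/
lemma hasDerivAt_inv_denom_pow {c d t : ℂ} (h : c * t + d ≠ 0) (n : ℕ) :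
    HasDerivAt (fun s => (c * s + d)⁻¹ ^ n) (-n * c * (c * t + d)⁻¹ ^ (n + 1)) t := by
  have hlin : HasDerivAt (fun s => c * s + d) c t := by
    simpa using ((hasDerivAt_id t).const_mul c).add_const d
  refine ((hlin.fun_inv h).fun_pow n).congr_deriv ?_
  rcases n with _ | n
  · simp
  · simp only [Nat.add_sub_cancel, div_eq_mul_inv, ← inv_pow]
    ring

/-- Derivative of the weight-`n` slash `(ct + d)⁻ⁿ f((at + b)/(ct + d))`. -/
lemma hasDerivAt_inv_denom_pow_mul_comp {a b c d t : ℂ} (habcd : a * d - b * c = 1)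
    (h : c * t + d ≠ 0) {f : ℂ → ℂ} (hf : DifferentiableAt ℂ f ((a * t + b) / (c * t + d)))
    (n : ℕ) :
    HasDerivAt (fun s => (c * s + d)⁻¹ ^ n * f ((a * s + b) / (c * s + d)))
      (-n * c * (c * t + d)⁻¹ ^ (n + 1) * f ((a * t + b) / (c * t + d))
        + (c * t + d)⁻¹ ^ (n + 2) * deriv f ((a * t + b) / (c * t + d))) t := by
  have hnum : HasDerivAt (fun s => a * s + b) a t := by
    simpa using ((hasDerivAt_id t).const_mul a).add_const b
  have hden : HasDerivAt (fun s => c * s + d) c t := by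
    simpa using ((hasDerivAt_id t).const_mul c).add_const d
  have hmoebius : HasDerivAt (fun s => (a * s + b) / (c * s + d)) ((c * t + d)⁻¹ ^ 2) t := by
    refine (hnum.fun_div hden h).congr_deriv ?_
    field_simp
    linear_combination habcd
  refine ((hasDerivAt_inv_denom_pow h n).fun_mul
    (hf.hasDerivAt.comp t hmoebius)).congr_deriv ?_
  simp only [Function.comp_apply]
  ring

/-- If `f` agrees with `g` on the upper half plane, they have the same derivative there. -/
lemma deriv_eq_of_eq_on_im_pos {f g : ℂ → ℂ} (hfg : ∀ t : ℂ, 0 < t.im → f t = g t)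
    {g' t : ℂ} (ht : 0 < t.im) (hg : HasDerivAt g g' t) : deriv f t = g' := by
  have hev : f =ᶠ[𝓝 t] g := by
    filter_upwards [(isOpen_lt continuous_const Complex.continuous_im).mem_nhds ht] with s hs
    exact hfg s hs
  rw [hev.deriv_eq, hg.deriv]

/-- **SL(2,ℝ)-invariance of Chazy's equation.**
If `y` is three times differentiable on the upper half plane `ℍ = {t | 0 < im t}` and
satisfies Chazy's equation `y''' = 2 y y'' − 3 (y')²` there, and `a, b, c, d ∈ ℝ` with
`ad − bc = 1`, then `ỹ(t) = (ct+d)⁻² y((at+b)/(ct+d)) − 6c/(ct+d)` also satisfies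
Chazy's equation on `ℍ`. -/
theorem chazy_sl2_invariance
    (y : ℂ → ℂ)
    (hy : ∀ t : ℂ, 0 < t.im → DifferentiableAt ℂ y t)
    (hy' : ∀ t : ℂ, 0 < t.im → DifferentiableAt ℂ (deriv y) t)
    (hy'' : ∀ t : ℂ, 0 < t.im → DifferentiableAt ℂ (deriv (deriv y)) t)
    (hchazy : ∀ t : ℂ, 0 < t.im →
      deriv (deriv (deriv y)) t = 2 * y t * deriv (deriv y) t - 3 * (deriv y t) ^ 2)
    (a b c d : ℝ) (habcd : a * d - b * c = 1)
    (yt : ℂ → ℂ)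
    (hyt : ∀ t : ℂ, yt t = ((c : ℂ) * t + d)⁻¹ ^ 2 *
      y (((a : ℂ) * t + b) / ((c : ℂ) * t + d)) - 6 * (c : ℂ) / ((c : ℂ) * t + d)) :
    ∀ t : ℂ, 0 < t.im →
      deriv (deriv (deriv yt)) t = 2 * yt t * deriv (deriv yt) t - 3 * (deriv yt t) ^ 2 := by
  have hdet : (a : ℂ) * d - b * c = 1 := by exact_mod_cast habcd
  have hne (t : ℂ) (ht : 0 < t.im) := moebius_denom_ne_zero habcd ht
  have him (t : ℂ) (ht : 0 < t.im) := moebius_im_pos habcd ht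
  have slash {f : ℂ → ℂ} (hf : ∀ t : ℂ, 0 < t.im → DifferentiableAt ℂ f t) (n : ℕ) (t : ℂ)
      (ht : 0 < t.im) :=
    hasDerivAt_inv_denom_pow_mul_comp hdet (hne t ht) (hf _ (him t ht)) n
  have pow (n : ℕ) (t : ℂ) (ht : 0 < t.im) := hasDerivAt_inv_denom_pow (hne t ht) n
  let u : ℂ → ℂ := fun t => ((c : ℂ) * t + d)⁻¹
  let m : ℂ → ℂ := fun t => ((a : ℂ) * t + b) / ((c : ℂ) * t + d)
  have h0 (t : ℂ) (_ : 0 < t.im) : yt t = u t ^ 2 * y (m t) - 6 * c * u t ^ 1 := by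
    rw [hyt, pow_one, div_eq_mul_inv (6 * (c : ℂ))]
  have h1 (t : ℂ) (ht : 0 < t.im) : deriv yt t =
      -2 * c * (u t ^ 3 * y (m t)) + u t ^ 4 * deriv y (m t) + 6 * c ^ 2 * u t ^ 2 := by
    refine deriv_eq_of_eq_on_im_pos h0 ht (((slash hy 2 t ht).fun_sub
      ((pow 1 t ht).const_mul (6 * (c : ℂ)))).congr_deriv ?_)
    simp only [u, m]
    push_cast
    ring
  have h2 (t : ℂ) (ht : 0 < t.im) : deriv (deriv yt) t =
      6 * c ^ 2 * (u t ^ 4 * y (m t)) + -6 * c * (u t ^ 5 * deriv y (m t))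
        + u t ^ 6 * deriv (deriv y) (m t) + -12 * c ^ 3 * u t ^ 3 := by
    refine deriv_eq_of_eq_on_im_pos h1 ht (((((slash hy 3 t ht).const_mul (-2 * (c : ℂ))).fun_add
      (slash hy' 4 t ht)).fun_add ((pow 2 t ht).const_mul (6 * (c : ℂ) ^ 2))).congr_deriv ?_)
    simp only [u, m]
    push_cast
    ring
  have h3 (t : ℂ) (ht : 0 < t.im) : deriv (deriv (deriv yt)) t =
      -24 * c ^ 3 * (u t ^ 5 * y (m t)) + 36 * c ^ 2 * (u t ^ 6 * deriv y (m t))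
        + -12 * c * (u t ^ 7 * deriv (deriv y) (m t))
        + u t ^ 8 * deriv (deriv (deriv y)) (m t) + 36 * c ^ 4 * u t ^ 4 := by
    refine deriv_eq_of_eq_on_im_pos h2 ht
      ((((((slash hy 4 t ht).const_mul (6 * (c : ℂ) ^ 2)).fun_add
        ((slash hy' 5 t ht).const_mul (-6 * (c : ℂ)))).fun_add (slash hy'' 6 t ht)).fun_add
        ((pow 3 t ht).const_mul (-12 * (c : ℂ) ^ 3))).congr_deriv ?_)
    simp only [u, m]
    push_cast
    ring
  intro t ht
  rw [h3 t ht, h2 t ht, h1 t ht, h0 t ht, hchazy (m t) (him t ht)]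
  ring
end

section
/- Let Ω ⊆ ℂ be open and let ω₁, ω₂, ω₃, φ, θ : Ω → ℂ be differentiable. Let M(t) be the 3×3 matrix with rows (ω₁, θ, 0), (φ, ω₂, 0), (0, 0, ω₃). Then M satisfies the DH-IX system dM/dt = (adj M)ᵀ + Mᵀ M − (Tr M) M on Ω if and only if (ω₁, ω₂, ω₃, φ, θ) satisfies the DH-V system: ω₁' = ω₂ω₃ − ω₁(ω₂+ω₃) + φ², ω₂' = ω₃ω₁ − ω₂(ω₃+ω₁) + θ², ω₃' = ω₁ω₂ − ω₃(ω₁+ω₂) − φθ, φ' = ω₁(θ−φ) − ω₃(θ+φ), θ' = −ω₂(θ−φ) − ω₃(θ+φ) on Ω. -/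
open Matrix

/-- **Block reduction of DH-IX to the fifth-order system DH-V.**
For `M` with rows `(ω₁, θ, 0)`, `(φ, ω₂, 0)`, `(0, 0, ω₃)`, the DH-IX system
`dM/dt = (adj M)ᵀ + Mᵀ M − (Tr M) M` on an open `Ω ⊆ ℂ` is equivalent to the DH-V system
for `(ω₁, ω₂, ω₃, φ, θ)`. -/
theorem dh_nine_block_iff_dh_five
    (Ω : Set ℂ) (hΩ : IsOpen Ω) (ω₁ ω₂ ω₃ φ θ : ℂ → ℂ)
    (h₁ : ∀ t ∈ Ω, DifferentiableAt ℂ ω₁ t)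
    (h₂ : ∀ t ∈ Ω, DifferentiableAt ℂ ω₂ t)
    (h₃ : ∀ t ∈ Ω, DifferentiableAt ℂ ω₃ t)
    (hφ : ∀ t ∈ Ω, DifferentiableAt ℂ φ t)
    (hθ : ∀ t ∈ Ω, DifferentiableAt ℂ θ t)
    (M : ℂ → Matrix (Fin 3) (Fin 3) ℂ)
    (hM : ∀ t, M t = !![ω₁ t, θ t, 0; φ t, ω₂ t, 0; 0, 0, ω₃ t]) :
    (∀ t ∈ Ω, ∀ i j : Fin 3,
        deriv (fun s => M s i j) t =
          ((Matrix.adjugate (M t))ᵀ + (M t)ᵀ * M t - Matrix.trace (M t) • M t) i j) ↔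
    (∀ t ∈ Ω,
        deriv ω₁ t = ω₂ t * ω₃ t - ω₁ t * (ω₂ t + ω₃ t) + φ t ^ 2 ∧
        deriv ω₂ t = ω₃ t * ω₁ t - ω₂ t * (ω₃ t + ω₁ t) + θ t ^ 2 ∧
        deriv ω₃ t = ω₁ t * ω₂ t - ω₃ t * (ω₁ t + ω₂ t) - φ t * θ t ∧
        deriv φ t = ω₁ t * (θ t - φ t) - ω₃ t * (θ t + φ t) ∧
        deriv θ t = -ω₂ t * (θ t - φ t) - ω₃ t * (θ t + φ t)) := by
  refine forall₂_congr fun t _ => ?_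
  simp [hM, adjugate_fin_three_of, Fin.forall_fin_succ, trace_fin_three, mul_apply,
    Fin.sum_univ_three]
  constructor
  · rintro ⟨⟨e₁, eθ⟩, ⟨eφ, e₂⟩, e₃⟩
    refine ⟨?_, ?_, ?_, ?_, ?_⟩
    · linear_combination e₁
    · linear_combination e₂
    · linear_combination e₃
    · linear_combination eφ
    · linear_combination eθ
  · rintro ⟨e₁, e₂, e₃, eφ, eθ⟩
    refine ⟨⟨?_, ?_⟩, ⟨?_, ?_⟩, ?_⟩
    · linear_combination e₁
    · linear_combination eθ
    · linear_combination eφ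
    · linear_combination e₂
    · linear_combination e₃
end

section
/- Let Ω ⊆ ℂ be open, let α₁, α₂, α₃ ∈ ℂ, and let ω₁, ω₂, ω₃ : Ω → ℂ be differentiable. Define x₁, x₂, x₃ by 2ω₁ = −x₂ − x₃, 2ω₂ = −x₃ − x₁, 2ω₃ = −x₁ − x₂ (i.e. x₁ = ω₁ − ω₂ − ω₃, etc.), and define parameters a, b, c by 8a = α₁² + α₂² − α₃² − 1, 8b = −α₁² + α₂² + α₃² − 1, 8c = α₁² − α₂² + α₃² − 1. Then (ω₁, ω₂, ω₃) satisfies the system ω₁' = ω₂ω₃ − ω₁(ω₂+ω₃) + τ², ω₂' = ω₃ω₁ − ω₂(ω₃+ω₁) + τ², ω₃' = ω₁ω₂ − ω₃(ω₁+ω₂) + τ², where τ² := α₁²(ω₁−ω₂)(ω₃−ω₁) + α₂²(ω₂−ω₃)(ω₁−ω₂) + α₃²(ω₃−ω₁)(ω₂−ω₃), if and only if (x₁, x₂, x₃) satisfies Halphen's second system with parameters a, b, c on Ω. -/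
/-- **Equivalence of the reduced DH-IX system (with `τ²` term) and Halphen's second system.**
With `2ω₁ = −x₂ − x₃`, `2ω₂ = −x₃ − x₁`, `2ω₃ = −x₁ − x₂` and parameters
`8a = α₁² + α₂² − α₃² − 1`, `8b = −α₁² + α₂² + α₃² − 1`, `8c = α₁² − α₂² + α₃² − 1`,
the system `ωⱼ' = ω_kω_l − ωⱼ(ω_k + ω_l) + τ²` with
`τ² = α₁²(ω₁−ω₂)(ω₃−ω₁) + α₂²(ω₂−ω₃)(ω₁−ω₂) + α₃²(ω₃−ω₁)(ω₂−ω₃)`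
is equivalent to Halphen's second system for `(x₁, x₂, x₃)` with parameters `a, b, c`. -/
theorem ach_system_iff_halphen_second
    (Ω : Set ℂ) (hΩ : IsOpen Ω) (α₁ α₂ α₃ : ℂ) (ω₁ ω₂ ω₃ : ℂ → ℂ)
    (h₁ : ∀ t ∈ Ω, DifferentiableAt ℂ ω₁ t)
    (h₂ : ∀ t ∈ Ω, DifferentiableAt ℂ ω₂ t)
    (h₃ : ∀ t ∈ Ω, DifferentiableAt ℂ ω₃ t)
    (x₁ x₂ x₃ : ℂ → ℂ)
    (hx₁ : ∀ t, x₁ t = ω₁ t - ω₂ t - ω₃ t)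
    (hx₂ : ∀ t, x₂ t = ω₂ t - ω₃ t - ω₁ t)
    (hx₃ : ∀ t, x₃ t = ω₃ t - ω₁ t - ω₂ t)
    (a b c : ℂ)
    (ha : 8 * a = α₁ ^ 2 + α₂ ^ 2 - α₃ ^ 2 - 1)
    (hb : 8 * b = -α₁ ^ 2 + α₂ ^ 2 + α₃ ^ 2 - 1)
    (hc : 8 * c = α₁ ^ 2 - α₂ ^ 2 + α₃ ^ 2 - 1)
    (τsq : ℂ → ℂ)
    (hτ : ∀ t, τsq t = α₁ ^ 2 * (ω₁ t - ω₂ t) * (ω₃ t - ω₁ t) +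
        α₂ ^ 2 * (ω₂ t - ω₃ t) * (ω₁ t - ω₂ t) +
        α₃ ^ 2 * (ω₃ t - ω₁ t) * (ω₂ t - ω₃ t)) :
    (∀ t ∈ Ω,
        deriv ω₁ t = ω₂ t * ω₃ t - ω₁ t * (ω₂ t + ω₃ t) + τsq t ∧
        deriv ω₂ t = ω₃ t * ω₁ t - ω₂ t * (ω₃ t + ω₁ t) + τsq t ∧
        deriv ω₃ t = ω₁ t * ω₂ t - ω₃ t * (ω₁ t + ω₂ t) + τsq t) ↔
    (∀ t ∈ Ω,
        deriv x₁ t = x₁ t ^ 2 + a * (x₁ t - x₂ t) ^ 2 + b * (x₂ t - x₃ t) ^ 2 +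
          c * (x₃ t - x₁ t) ^ 2 ∧
        deriv x₂ t = x₂ t ^ 2 + a * (x₁ t - x₂ t) ^ 2 + b * (x₂ t - x₃ t) ^ 2 +
          c * (x₃ t - x₁ t) ^ 2 ∧
        deriv x₃ t = x₃ t ^ 2 + a * (x₁ t - x₂ t) ^ 2 + b * (x₂ t - x₃ t) ^ 2 +
          c * (x₃ t - x₁ t) ^ 2) := by
  refine forall₂_congr fun t ht => ?_
  have d₁ : deriv x₁ t = deriv ω₁ t - deriv ω₂ t - deriv ω₃ t := by
    rw [funext hx₁]
    exact (((h₁ t ht).hasDerivAt.sub (h₂ t ht).hasDerivAt).sub (h₃ t ht).hasDerivAt).deriv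
  have d₂ : deriv x₂ t = deriv ω₂ t - deriv ω₃ t - deriv ω₁ t := by
    rw [funext hx₂]
    exact (((h₂ t ht).hasDerivAt.sub (h₃ t ht).hasDerivAt).sub (h₁ t ht).hasDerivAt).deriv
  have d₃ : deriv x₃ t = deriv ω₃ t - deriv ω₁ t - deriv ω₂ t := by
    rw [funext hx₃]
    exact (((h₃ t ht).hasDerivAt.sub (h₁ t ht).hasDerivAt).sub (h₂ t ht).hasDerivAt).deriv
  have quad : a * (x₁ t - x₂ t) ^ 2 + b * (x₂ t - x₃ t) ^ 2 + c * (x₃ t - x₁ t) ^ 2 =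
      -τsq t - (ω₁ t ^ 2 + ω₂ t ^ 2 + ω₃ t ^ 2 -
        ω₁ t * ω₂ t - ω₂ t * ω₃ t - ω₃ t * ω₁ t) := by
    rw [hx₁, hx₂, hx₃, hτ]
    linear_combination (ω₁ t - ω₂ t) ^ 2 / 2 * ha + (ω₂ t - ω₃ t) ^ 2 / 2 * hb +
      (ω₃ t - ω₁ t) ^ 2 / 2 * hc
  simp only [add_assoc] at quad ⊢
  rw [quad, d₁, d₂, d₃, hx₁, hx₂, hx₃]
  constructor
  · rintro ⟨e₁, e₂, e₃⟩
    refine ⟨?_, ?_, ?_⟩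
    · linear_combination e₁ - e₂ - e₃
    · linear_combination e₂ - e₃ - e₁
    · linear_combination e₃ - e₁ - e₂
  · rintro ⟨e₁, e₂, e₃⟩
    refine ⟨?_, ?_, ?_⟩
    · linear_combination -(e₂ + e₃) / 2
    · linear_combination -(e₃ + e₁) / 2
    · linear_combination -(e₁ + e₂) / 2
end

section
/- Let a, b, c ∈ ℂ, let U ⊆ ℂ be open with 0, 1 ∉ U, and let u : U → ℂ be a twice differentiable solution of the Fuchsian equation u''(z) = ((a+b)/z² + (c+b)/(z−1)² − 2b/(z(z−1))) u(z) on U. Let Ω ⊆ ℂ be open and z : Ω → ℂ differentiable with z(Ω) ⊆ U, u(z(t)) ≠ 0 for all t ∈ Ω, and z'(t) = u(z(t))² for all t ∈ Ω. Define x₁(t) = u'(z(t)) · u(z(t)), x₂(t) = x₁(t) − z'(t)/z(t), x₃(t) = x₁(t) − z'(t)/(z(t)−1) (these are d/dt of log u(z(t)), log(u(z(t))/z(t)), log(u(z(t))/(z(t)−1)) respectively). Then (x₁, x₂, x₃) satisfies Halphen's second system with parameters a, b, c on Ω. -/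
/-- **Hypergeometric (Fuchsian) solution of Halphen's second system.**
Let `u` solve the Fuchsian equation `u'' = ((a+b)/z² + (c+b)/(z−1)² − 2b/(z(z−1))) u` on an
open set `U` avoiding `0` and `1`, and let `z : Ω → U` be differentiable with
`u(z(t)) ≠ 0` and `z'(t) = u(z(t))²`. Then `x₁ = u'(z)u(z)`, `x₂ = x₁ − z'/z`,
`x₃ = x₁ − z'/(z−1)` satisfy Halphen's second system with parameters `a, b, c` on `Ω`. -/
theorem fuchsian_solves_halphen_second
    (a b c : ℂ) (U : Set ℂ) (hU : IsOpen U) (h0 : (0 : ℂ) ∉ U) (h1 : (1 : ℂ) ∉ U)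
    (u : ℂ → ℂ)
    (hu : ∀ z ∈ U, DifferentiableAt ℂ u z)
    (hu' : ∀ z ∈ U, DifferentiableAt ℂ (deriv u) z)
    (hfuchs : ∀ z ∈ U, deriv (deriv u) z =
      ((a + b) / z ^ 2 + (c + b) / (z - 1) ^ 2 - 2 * b / (z * (z - 1))) * u z)
    (Ω : Set ℂ) (hΩ : IsOpen Ω) (z : ℂ → ℂ)
    (hz : ∀ t ∈ Ω, DifferentiableAt ℂ z t)
    (hrange : ∀ t ∈ Ω, z t ∈ U)
    (hne : ∀ t ∈ Ω, u (z t) ≠ 0)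
    (hwron : ∀ t ∈ Ω, deriv z t = u (z t) ^ 2)
    (x₁ x₂ x₃ : ℂ → ℂ)
    (hx₁ : ∀ t, x₁ t = deriv u (z t) * u (z t))
    (hx₂ : ∀ t, x₂ t = x₁ t - deriv z t / z t)
    (hx₃ : ∀ t, x₃ t = x₁ t - deriv z t / (z t - 1)) :
    ∀ t ∈ Ω,
      deriv x₁ t = x₁ t ^ 2 + a * (x₁ t - x₂ t) ^ 2 + b * (x₂ t - x₃ t) ^ 2 +
        c * (x₃ t - x₁ t) ^ 2 ∧
      deriv x₂ t = x₂ t ^ 2 + a * (x₁ t - x₂ t) ^ 2 + b * (x₂ t - x₃ t) ^ 2 +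
        c * (x₃ t - x₁ t) ^ 2 ∧
      deriv x₃ t = x₃ t ^ 2 + a * (x₁ t - x₂ t) ^ 2 + b * (x₂ t - x₃ t) ^ 2 +
        c * (x₃ t - x₁ t) ^ 2 := by
  intro t ht
  have hzU := hrange t ht
  have hz0 : z t ≠ 0 := fun h => h0 (h ▸ hzU)
  have hz1 : z t - 1 ≠ 0 := fun h => h1 (sub_eq_zero.mp h ▸ hzU)
  have dz : HasDerivAt z (u (z t) ^ 2) t := hwron t ht ▸ (hz t ht).hasDerivAt
  have du : HasDerivAt (fun s => u (z s)) (deriv u (z t) * u (z t) ^ 2) t :=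
    (hu _ hzU).hasDerivAt.comp t dz
  have du' : HasDerivAt (fun s => deriv u (z s)) (deriv (deriv u) (z t) * u (z t) ^ 2) t :=
    (hu' _ hzU).hasDerivAt.comp t dz
  have d₁ := du'.mul du
  have d₂ := d₁.sub ((du.pow 2).div dz hz0)
  have d₃ := d₁.sub ((du.pow 2).div (dz.sub_const 1) hz1)
  have hΩt : ∀ᶠ s in nhds t, s ∈ Ω := hΩ.mem_nhds ht
  have e₁ := (d₁.congr_of_eventuallyEq (f₁ := x₁) (.of_forall hx₁)).deriv
  have e₂ := (d₂.congr_of_eventuallyEq (f₁ := x₂) (by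
    filter_upwards [hΩt] with s hs
    simp [hx₂, hx₁, hwron s hs])).deriv
  have e₃ := (d₃.congr_of_eventuallyEq (f₁ := x₃) (by
    filter_upwards [hΩt] with s hs
    simp [hx₃, hx₁, hwron s hs])).deriv
  simp only [Pi.pow_apply, Nat.cast_ofNat, Nat.add_one_sub_one, pow_one] at e₂ e₃
  rw [e₁, e₂, e₃, hx₂, hx₃, hx₁, hwron t ht, hfuchs _ hzU]
  refine ⟨?_, ?_, ?_⟩ <;> field_simp <;> ring
end

section
/- Let Ω ⊆ ℂ be open, a, b, c ∈ ℂ, and let x₁, x₂, x₃ : Ω → ℂ be differentiable functions satisfying Halphen's second system xⱼ' = Q(xⱼ, t) where Q(x, t) := x² + a(x₁(t)−x₂(t))² + b(x₂(t)−x₃(t))² + c(x₃(t)−x₁(t))². Let c₁, c₂, c₃ ∈ ℂ with c₁ + c₂ + c₃ = 0. Then for every t ∈ Ω and every x ∈ ℂ with x ≠ x₁(t), x₂(t), x₃(t), the compatibility identity Σⱼ cⱼ xⱼ'(t)/(x − xⱼ(t))² = Q(x, t) · Σⱼ cⱼ/(x − xⱼ(t))² − 2x · Σⱼ cⱼ/(x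 − xⱼ(t)) holds. Equivalently, for any traceless constant 2×2 matrix S, with A(x,t) = Σⱼ (cⱼ/(x − xⱼ(t))) S and B(x,t) = Σⱼ cⱼ xⱼ(t) S − Q(x,t) A(x,t), one has ∂ₜA = ∂ₓB + [B, A] off the poles. -/
/-- Partial-fraction form of one pole term when the pole moves by `y' = y² + k`. -/
lemma pole_velocity_div_sq {K : Type*} [Field K] (r k : K) {x y : K} (h : x ≠ y) :
    r * (y ^ 2 + k) / (x - y) ^ 2 =
      (x ^ 2 + k) * (r / (x - y) ^ 2) - 2 * x * (r / (x - y)) + r := by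
  have h' : x - y ≠ 0 := sub_ne_zero.mpr h
  field_simp
  ring

lemma hasDerivAt_const_div_const_sub {𝕜 : Type*} [NontriviallyNormedField 𝕜] (r x : 𝕜)
    {f : 𝕜 → 𝕜} {f' t : 𝕜} (hf : HasDerivAt f f' t) (h : x ≠ f t) :
    HasDerivAt (fun s => r / (x - f s)) (r * f' / (x - f t) ^ 2) t := by
  simpa using (hasDerivAt_const t r).fun_div (hf.const_sub x) (sub_ne_zero.mpr h)

lemma hasDerivAt_const_div_sub_const {𝕜 : Type*} [NontriviallyNormedField 𝕜] (r : 𝕜)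
    {x y : 𝕜} (h : x ≠ y) :
    HasDerivAt (fun z => r / (z - y)) (-(r / (x - y) ^ 2)) x := by
  simpa [neg_div] using (hasDerivAt_const x r).fun_div ((hasDerivAt_id' x).sub_const y)
    (sub_ne_zero.mpr h)

/-- **Compatibility (zero-curvature) identity for the Lax pair of Halphen's second system.**
If `(x₁, x₂, x₃)` solves Halphen's second system `xⱼ' = Q(xⱼ, t)` with
`Q(x,t) = x² + a(x₁−x₂)² + b(x₂−x₃)² + c(x₃−x₁)²`, and `c₁ + c₂ + c₃ = 0`, then off the poles
`Σⱼ cⱼxⱼ'/(x−xⱼ)² = Q(x,t)·Σⱼ cⱼ/(x−xⱼ)² − 2x·Σⱼ cⱼ/(x−xⱼ)`; equivalently, for any traceless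
constant `2×2` matrix `S`, with `A = Σⱼ (cⱼ/(x−xⱼ))S` and `B = Σⱼ cⱼxⱼS − Q·A`, one has
`∂ₜA = ∂ₓB + [B, A]`. -/
theorem halphen_second_lax_compatibility
    (Ω : Set ℂ) (hΩ : IsOpen Ω) (a b c : ℂ) (x₁ x₂ x₃ : ℂ → ℂ)
    (h₁ : ∀ t ∈ Ω, DifferentiableAt ℂ x₁ t)
    (h₂ : ∀ t ∈ Ω, DifferentiableAt ℂ x₂ t)
    (h₃ : ∀ t ∈ Ω, DifferentiableAt ℂ x₃ t)
    (Q : ℂ → ℂ → ℂ)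
    (hQ : ∀ x t, Q x t = x ^ 2 + a * (x₁ t - x₂ t) ^ 2 + b * (x₂ t - x₃ t) ^ 2 +
      c * (x₃ t - x₁ t) ^ 2)
    (hsys : ∀ t ∈ Ω, deriv x₁ t = Q (x₁ t) t ∧ deriv x₂ t = Q (x₂ t) t ∧
      deriv x₃ t = Q (x₃ t) t)
    (c₁ c₂ c₃ : ℂ) (hsum : c₁ + c₂ + c₃ = 0) :
    ∀ t ∈ Ω, ∀ x : ℂ, x ≠ x₁ t → x ≠ x₂ t → x ≠ x₃ t →
      (c₁ * deriv x₁ t / (x - x₁ t) ^ 2 + c₂ * deriv x₂ t / (x - x₂ t) ^ 2 +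
          c₃ * deriv x₃ t / (x - x₃ t) ^ 2 =
        Q x t * (c₁ / (x - x₁ t) ^ 2 + c₂ / (x - x₂ t) ^ 2 + c₃ / (x - x₃ t) ^ 2) -
          2 * x * (c₁ / (x - x₁ t) + c₂ / (x - x₂ t) + c₃ / (x - x₃ t))) ∧
      (∀ S : Matrix (Fin 2) (Fin 2) ℂ, Matrix.trace S = 0 →
        let A : ℂ → ℂ → Matrix (Fin 2) (Fin 2) ℂ :=
          fun x' s => (c₁ / (x' - x₁ s) + c₂ / (x' - x₂ s) + c₃ / (x' - x₃ s)) • S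
        let B : ℂ → ℂ → Matrix (Fin 2) (Fin 2) ℂ :=
          fun x' s => (c₁ * x₁ s + c₂ * x₂ s + c₃ * x₃ s) • S - Q x' s • A x' s
        ∀ i j : Fin 2,
          deriv (fun s => A x s i j) t =
            deriv (fun x' => B x' t i j) x +
              (B x t * A x t - A x t * B x t) i j) := by
  intro t ht x hx₁ hx₂ hx₃
  obtain ⟨e₁, e₂, e₃⟩ := hsys t ht
  obtain ⟨k, hk⟩ : ∃ k, ∀ z, Q z t = z ^ 2 + k :=
    ⟨a * (x₁ t - x₂ t) ^ 2 + b * (x₂ t - x₃ t) ^ 2 + c * (x₃ t - x₁ t) ^ 2,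
      fun z => by rw [hQ]; ring⟩
  have scalar : c₁ * deriv x₁ t / (x - x₁ t) ^ 2 + c₂ * deriv x₂ t / (x - x₂ t) ^ 2 +
          c₃ * deriv x₃ t / (x - x₃ t) ^ 2 =
        Q x t * (c₁ / (x - x₁ t) ^ 2 + c₂ / (x - x₂ t) ^ 2 + c₃ / (x - x₃ t) ^ 2) -
          2 * x * (c₁ / (x - x₁ t) + c₂ / (x - x₂ t) + c₃ / (x - x₃ t)) := by
    rw [e₁, e₂, e₃, hk, hk, hk, hk, pole_velocity_div_sq c₁ k hx₁,
      pole_velocity_div_sq c₂ k hx₂, pole_velocity_div_sq c₃ k hx₃]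
    linear_combination hsum
  refine ⟨scalar, ?_⟩
  intro S _ A B i j
  have comm : B x t * A x t - A x t * B x t = 0 := by
    simp only [A, B, sub_mul, mul_sub, smul_mul_assoc, mul_smul_comm, smul_smul]
    module
  have hA : HasDerivAt (fun s => A x s i j)
      ((c₁ * deriv x₁ t / (x - x₁ t) ^ 2 + c₂ * deriv x₂ t / (x - x₂ t) ^ 2 +
        c₃ * deriv x₃ t / (x - x₃ t) ^ 2) * S i j) t :=
    (((hasDerivAt_const_div_const_sub c₁ x (h₁ t ht).hasDerivAt hx₁).fun_add
      (hasDerivAt_const_div_const_sub c₂ x (h₂ t ht).hasDerivAt hx₂)).fun_add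
      (hasDerivAt_const_div_const_sub c₃ x (h₃ t ht).hasDerivAt hx₃)).mul_const (S i j)
  have hAx : HasDerivAt (fun z => A z t i j)
      ((-(c₁ / (x - x₁ t) ^ 2) + -(c₂ / (x - x₂ t) ^ 2) + -(c₃ / (x - x₃ t) ^ 2)) * S i j) x :=
    (((hasDerivAt_const_div_sub_const c₁ hx₁).fun_add
      (hasDerivAt_const_div_sub_const c₂ hx₂)).fun_add
      (hasDerivAt_const_div_sub_const c₃ hx₃)).mul_const (S i j)
  have hQx : HasDerivAt (fun z => Q z t) (2 * x) x := by
    simpa [hk] using (hasDerivAt_pow 2 x).add_const k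
  have hB : HasDerivAt (fun z => B z t i j) _ x :=
    (hQx.fun_mul hAx).const_sub ((c₁ * x₁ t + c₂ * x₂ t + c₃ * x₃ t) * S i j)
  rw [comm, hA.deriv, hB.deriv, scalar]
  simp only [A, Matrix.smul_apply, Matrix.zero_apply, smul_eq_mul]
  ring
end

section
/- Let Ω ⊆ ℂ be open, a, b, c ∈ ℂ, and let x₁, x₂, x₃ : Ω → ℂ be differentiable with x₁(t), x₂(t), x₃(t) pairwise distinct for all t ∈ Ω. Set Q(x, t) := x² + a(x₁(t)−x₂(t))² + b(x₂(t)−x₃(t))² + c(x₃(t)−x₁(t))². Let c₁, c₂, c₃ ∈ ℂ with c₁ + c₂ + c₃ = 0 and cⱼ ≠ 0 for j = 1, 2, 3. If for every t ∈ Ω the identity Σⱼ cⱼ xⱼ'(t)/(x − xⱼ(t))² = Q(x, t) · Σⱼ cⱼ/(x − xⱼ(t))² − 2x · Σⱼ cⱼ/(x − xⱼ(t)) holds for all x in some nonempty open subset of ℂ \ {x₁(t), x₂(t), x₃(t)}, then xⱼ'(t) = Q(xⱼ(t), t) for j = 1, 2, 3 and all t ∈ Ω; that is, (x₁, x₂,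 x₃) satisfies Halphen's second system with parameters a, b, c. -/
open Polynomial in
/-- If a combination of the double poles `1/(x-p)²`, `1/(x-q)²`, `1/(x-r)²` vanishes at infinitely
many points and `p` differs from `q` and `r`, then the coefficient at `p` is zero. -/
theorem coeff_eq_zero_of_sum_double_poles_eq_zero {K : Type*} [Field K] {V : Set K}
    (hV : V.Infinite) {p q r d e f : K} (hpq : p ≠ q) (hpr : p ≠ r)
    (hVp : ∀ x ∈ V, x ≠ p ∧ x ≠ q ∧ x ≠ r)
    (h : ∀ x ∈ V, d / (x - p) ^ 2 + e / (x - q) ^ 2 + f / (x - r) ^ 2 = 0) : d = 0 := by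
  let P : K[X] := C d * ((X - C q) ^ 2 * (X - C r) ^ 2) + C e * ((X - C p) ^ 2 * (X - C r) ^ 2) +
    C f * ((X - C p) ^ 2 * (X - C q) ^ 2)
  have hP : P = 0 := by
    refine eq_zero_of_infinite_isRoot P (hV.mono fun x hx => ?_)
    obtain ⟨hp, hq, hr⟩ := hVp x hx
    have hp' := sub_ne_zero.mpr hp
    have hq' := sub_ne_zero.mpr hq
    have hr' := sub_ne_zero.mpr hr
    have hx0 := h x hx
    field_simp at hx0
    simp only [P, Set.mem_ofPred_eq, IsRoot.def, eval_add, eval_mul, eval_pow, eval_sub, eval_X,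
      eval_C]
    linear_combination hx0
  have hp0 : P.eval p = 0 := by rw [hP, eval_zero]
  simpa [P, sub_ne_zero.mpr hpq, sub_ne_zero.mpr hpr] using hp0

/-- For `Q x = x ^ 2 + k`, the combination `Q x / (x - p) ^ 2 - 2 * x / (x - p)` has only a double
pole at `p`. -/
theorem quadratic_div_sq_sub_eq {K : Type*} [Field K] {x p : K} (hx : x ≠ p) (k m : K) :
    (x ^ 2 + k) * (m / (x - p) ^ 2) - 2 * x * (m / (x - p)) =
      m * (p ^ 2 + k) / (x - p) ^ 2 - m := by
  have hx' := sub_ne_zero.mpr hx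
  field_simp
  ring

/-- **The compatibility identity implies Halphen's second system.**
If `x₁, x₂, x₃` are differentiable with pairwise distinct values, `c₁ + c₂ + c₃ = 0` with all
`cⱼ ≠ 0`, and for every `t ∈ Ω` the identity
`Σⱼ cⱼxⱼ'/(x−xⱼ)² = Q(x,t)·Σⱼ cⱼ/(x−xⱼ)² − 2x·Σⱼ cⱼ/(x−xⱼ)` holds for all `x` in some
nonempty open subset of `ℂ \ {x₁(t), x₂(t), x₃(t)}`, then `xⱼ' = Q(xⱼ)`:
`(x₁, x₂, x₃)` satisfies Halphen's second system with parameters `a, b, c`. -/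
theorem lax_compatibility_implies_halphen_second
    (Ω : Set ℂ) (hΩ : IsOpen Ω) (a b c : ℂ) (x₁ x₂ x₃ : ℂ → ℂ)
    (h₁ : ∀ t ∈ Ω, DifferentiableAt ℂ x₁ t)
    (h₂ : ∀ t ∈ Ω, DifferentiableAt ℂ x₂ t)
    (h₃ : ∀ t ∈ Ω, DifferentiableAt ℂ x₃ t)
    (hdist : ∀ t ∈ Ω, x₁ t ≠ x₂ t ∧ x₂ t ≠ x₃ t ∧ x₃ t ≠ x₁ t)
    (Q : ℂ → ℂ → ℂ)
    (hQ : ∀ x t, Q x t = x ^ 2 + a * (x₁ t - x₂ t) ^ 2 + b * (x₂ t - x₃ t) ^ 2 +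
      c * (x₃ t - x₁ t) ^ 2)
    (c₁ c₂ c₃ : ℂ) (hsum : c₁ + c₂ + c₃ = 0)
    (hc₁ : c₁ ≠ 0) (hc₂ : c₂ ≠ 0) (hc₃ : c₃ ≠ 0)
    (hident : ∀ t ∈ Ω, ∃ V : Set ℂ, IsOpen V ∧ V.Nonempty ∧
      V ⊆ {x : ℂ | x ≠ x₁ t ∧ x ≠ x₂ t ∧ x ≠ x₃ t} ∧
      ∀ x ∈ V,
        c₁ * deriv x₁ t / (x - x₁ t) ^ 2 + c₂ * deriv x₂ t / (x - x₂ t) ^ 2 +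
            c₃ * deriv x₃ t / (x - x₃ t) ^ 2 =
          Q x t * (c₁ / (x - x₁ t) ^ 2 + c₂ / (x - x₂ t) ^ 2 + c₃ / (x - x₃ t) ^ 2) -
            2 * x * (c₁ / (x - x₁ t) + c₂ / (x - x₂ t) + c₃ / (x - x₃ t))) :
    ∀ t ∈ Ω, deriv x₁ t = Q (x₁ t) t ∧ deriv x₂ t = Q (x₂ t) t ∧
      deriv x₃ t = Q (x₃ t) t := by
  intro t ht
  obtain ⟨V, hVo, ⟨y, hy⟩, hVp, hV⟩ := hident t ht
  obtain ⟨h12, h23, h31⟩ := hdist t ht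
  have hVinf : V.Infinite := infinite_of_mem_nhds y (hVo.mem_nhds hy)
  have key : ∀ x ∈ V, c₁ * (deriv x₁ t - Q (x₁ t) t) / (x - x₁ t) ^ 2 +
      c₂ * (deriv x₂ t - Q (x₂ t) t) / (x - x₂ t) ^ 2 +
      c₃ * (deriv x₃ t - Q (x₃ t) t) / (x - x₃ t) ^ 2 = 0 := by
    intro x hx
    obtain ⟨hp, hq, hr⟩ := hVp hx
    have hid := hV x hx
    simp only [hQ, add_assoc] at hid ⊢
    set k := a * (x₁ t - x₂ t) ^ 2 + (b * (x₂ t - x₃ t) ^ 2 + c * (x₃ t - x₁ t) ^ 2)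
    linear_combination hid + quadratic_div_sq_sub_eq hp k c₁ + quadratic_div_sq_sub_eq hq k c₂ +
      quadratic_div_sq_sub_eq hr k c₃ - hsum
  have e₁ := coeff_eq_zero_of_sum_double_poles_eq_zero hVinf h12 h31.symm (fun x hx => hVp hx) key
  have e₂ := coeff_eq_zero_of_sum_double_poles_eq_zero hVinf h23 h12.symm
    (fun x hx => ⟨(hVp hx).2.1, (hVp hx).2.2, (hVp hx).1⟩)
    (fun x hx => (add_rotate _ _ _).symm.trans (key x hx))
  have e₃ := coeff_eq_zero_of_sum_double_poles_eq_zero hVinf h31 h23.symm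
    (fun x hx => ⟨(hVp hx).2.2, (hVp hx).1, (hVp hx).2.1⟩)
    (fun x hx => (add_rotate _ _ _).trans (key x hx))
  exact ⟨sub_eq_zero.mp ((mul_eq_zero.mp e₁).resolve_left hc₁),
    sub_eq_zero.mp ((mul_eq_zero.mp e₂).resolve_left hc₂),
    sub_eq_zero.mp ((mul_eq_zero.mp e₃).resolve_left hc₃)⟩
end

section
/- Let Ω ⊆ ℂ be open, a, b, c ∈ ℂ, and let x₁, x₂, x₃ : Ω → ℂ be differentiable with x₁(t), x₂(t), x₃(t) pairwise distinct for all t ∈ Ω. Set Q(x, t) := x² + a(x₁(t)−x₂(t))² + b(x₂(t)−x₃(t))² + c(x₃(t)−x₁(t))² and P(x, t) := (x − x₁(t))(x − x₂(t))(x − x₃(t)). Then (x₁, x₂, x₃) satisfies Halphen's second system xⱼ'(t) = Q(xⱼ(t), t) for j = 1, 2, 3 if and only if for all t ∈ Ω and all x ∈ ℂ: ∂P/∂t + Q ∂P/∂x − P ∂Q/∂x − (x + x₁(t) + x₂(t) + x₃(t)) P = 0. -/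
/-- **Integrability condition for the scalar factor of the MED of Halphen's second system.**
With `Q(x,t) = x² + a(x₁−x₂)² + b(x₂−x₃)² + c(x₃−x₁)²` and `P(x,t) = Π(x − xⱼ(t))`,
the triple `(x₁, x₂, x₃)` satisfies Halphen's second system `xⱼ' = Q(xⱼ)` iff
`∂P/∂t + Q ∂P/∂x − P ∂Q/∂x − (x + x₁ + x₂ + x₃)P = 0` for all `t ∈ Ω` and `x ∈ ℂ`. -/
theorem halphen_second_iff_scalar_integrability
    (Ω : Set ℂ) (hΩ : IsOpen Ω) (a b c : ℂ) (x₁ x₂ x₃ : ℂ → ℂ)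
    (h₁ : ∀ t ∈ Ω, DifferentiableAt ℂ x₁ t)
    (h₂ : ∀ t ∈ Ω, DifferentiableAt ℂ x₂ t)
    (h₃ : ∀ t ∈ Ω, DifferentiableAt ℂ x₃ t)
    (hdist : ∀ t ∈ Ω, x₁ t ≠ x₂ t ∧ x₂ t ≠ x₃ t ∧ x₃ t ≠ x₁ t)
    (Q P : ℂ → ℂ → ℂ)
    (hQ : ∀ x t, Q x t = x ^ 2 + a * (x₁ t - x₂ t) ^ 2 + b * (x₂ t - x₃ t) ^ 2 +
      c * (x₃ t - x₁ t) ^ 2)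
    (hP : ∀ x t, P x t = (x - x₁ t) * (x - x₂ t) * (x - x₃ t)) :
    (∀ t ∈ Ω, deriv x₁ t = Q (x₁ t) t ∧ deriv x₂ t = Q (x₂ t) t ∧
      deriv x₃ t = Q (x₃ t) t) ↔
    (∀ t ∈ Ω, ∀ x : ℂ,
      deriv (fun s => P x s) t + Q x t * deriv (fun x' => P x' t) x -
        P x t * deriv (fun x' => Q x' t) x - (x + x₁ t + x₂ t + x₃ t) * P x t = 0) := by
  have key : ∀ t ∈ Ω, ∀ x : ℂ,
      deriv (fun s => P x s) t + Q x t * deriv (fun x' => P x' t) x -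
        P x t * deriv (fun x' => Q x' t) x - (x + x₁ t + x₂ t + x₃ t) * P x t =
      (Q (x₁ t) t - deriv x₁ t) * ((x - x₂ t) * (x - x₃ t)) +
        (Q (x₂ t) t - deriv x₂ t) * ((x - x₁ t) * (x - x₃ t)) +
        (Q (x₃ t) t - deriv x₃ t) * ((x - x₁ t) * (x - x₂ t)) := by
    intro t ht x
    have hPt := ((((h₁ t ht).hasDerivAt.const_sub x).fun_mul
      ((h₂ t ht).hasDerivAt.const_sub x)).fun_mul ((h₃ t ht).hasDerivAt.const_sub x)).deriv
    have hPx := ((((hasDerivAt_id' x).sub_const (x₁ t)).fun_mul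
      ((hasDerivAt_id' x).sub_const (x₂ t))).fun_mul
      ((hasDerivAt_id' x).sub_const (x₃ t))).deriv
    have hQx := ((((hasDerivAt_id' x).fun_pow 2).add_const (a * (x₁ t - x₂ t) ^ 2)).add_const
      (b * (x₂ t - x₃ t) ^ 2)).add_const (c * (x₃ t - x₁ t) ^ 2) |>.deriv
    simp only [hP, hQ]
    rw [hPt, hPx, hQx]
    push_cast
    ring
  constructor
  · intro h t ht x
    obtain ⟨e₁, e₂, e₃⟩ := h t ht
    rw [key t ht x, e₁, e₂, e₃]
    ring
  · intro h t ht
    obtain ⟨n₁₂, n₂₃, n₃₁⟩ := hdist t ht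
    have hzero := fun x => (key t ht x).symm.trans (h t ht x)
    have e₁ := hzero (x₁ t)
    have e₂ := hzero (x₂ t)
    have e₃ := hzero (x₃ t)
    simp only [sub_self, zero_mul, mul_zero, add_zero, zero_add, mul_eq_zero, sub_eq_zero,
      n₁₂, n₁₂.symm, n₂₃, n₂₃.symm, n₃₁, n₃₁.symm, or_false] at e₁ e₂ e₃
    exact ⟨e₁.symm, e₂.symm, e₃.symm⟩
end
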